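/- arXiv:funct-an/9712006 — 5 statements merged into one kernel-verified Lean document; each statement's English description precedes it below -/
import Mathlib

section
/- Let (E, μ) and (F, ν) be *-ternary rings. Then there exists a unique map μ⊙ν : (E ⊗ F) × (E ⊗ F) × (E ⊗ F) → E ⊗ F (algebraic tensor product over ℂ), linear in the first and third variables and conjugate-linear in the second, such that (μ⊙ν)(x⊗y, x'⊗y', x''⊗y'') = μ(x,x',x'') ⊗ ν(y,y',y'') for all x, x', x'' ∈ E and y, y', y'' ∈ F, and (E ⊗ F, μ⊙ν) is again a *-ternary ring, i.e. μ⊙ν satisfies the same associativity identities. -/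
/-!
Package `μ` and `ν` as maps `E →ₗ (E →ₛₗ[conj] End E)` and `F →ₗ (F →ₛₗ[conj] End F)`. Since
tensor products of semilinear maps exist (`TensorProduct.map₂`), these combine to a map
`E ⊗ F →ₗ (E ⊗ F →ₛₗ[conj] End E ⊗ End F)`, and composing with the canonical map
`End E ⊗ End F → End (E ⊗ F)` gives `μ ⊙ ν`. Uniqueness and the associativity identities hold
because maps additive in each variable agree once they agree on elementary tensors.
-/

open scoped TensorProduct

noncomputable section

/-- A *-ternary ring structure: a ternary product, linear in the first and third variables and
conjugate-linear in the second, satisfying the associativity identities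
`μ (μ x y z) u v = μ x (μ u z y) v = μ x y (μ z u v)`. -/
def IsStarTernary {E : Type*} [AddCommGroup E] [Module ℂ E] (μ : E → E → E → E) : Prop :=
  (∀ x x' y z, μ (x + x') y z = μ x y z + μ x' y z) ∧
  (∀ x y y' z, μ x (y + y') z = μ x y z + μ x y' z) ∧
  (∀ x y z z', μ x y (z + z') = μ x y z + μ x y z') ∧
  (∀ (c : ℂ) (x y z), μ (c • x) y z = c • μ x y z) ∧
  (∀ (c : ℂ) (x y z), μ x (c • y) z = (starRingEnd ℂ c) • μ x y z) ∧
  (∀ (c : ℂ) (x y z), μ x y (c • z) = c • μ x y z) ∧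
  (∀ x y z u v, μ (μ x y z) u v = μ x (μ u z y) v) ∧
  (∀ x y z u v, μ x (μ u z y) v = μ x y (μ z u v))

variable {E F : Type*} [AddCommGroup E] [Module ℂ E] [AddCommGroup F] [Module ℂ F]

/-- The property of being "the" ternary product `μ ⊙ ν` on `E ⊗ F`: additive in each variable,
linear in the first and third, conjugate-linear in the second, and satisfying
`(μ ⊙ ν)(x ⊗ y, x' ⊗ y', x'' ⊗ y'') = μ x x' x'' ⊗ ν y y' y''` on elementary tensors. -/
def IsTernaryTensorExt (μ : E → E → E → E) (ν : F → F → F → F)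
    (T : (E ⊗[ℂ] F) → (E ⊗[ℂ] F) → (E ⊗[ℂ] F) → E ⊗[ℂ] F) : Prop :=
  (∀ x x' y z, T (x + x') y z = T x y z + T x' y z) ∧
  (∀ x y y' z, T x (y + y') z = T x y z + T x y' z) ∧
  (∀ x y z z', T x y (z + z') = T x y z + T x y z') ∧
  (∀ (c : ℂ) (x y z), T (c • x) y z = c • T x y z) ∧
  (∀ (c : ℂ) (x y z), T x (c • y) z = (starRingEnd ℂ c) • T x y z) ∧
  (∀ (c : ℂ) (x y z), T x y (c • z) = c • T x y z) ∧
  (∀ (x x' x'' : E) (y y' y'' : F),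
    T (x ⊗ₜ[ℂ] y) (x' ⊗ₜ[ℂ] y') (x'' ⊗ₜ[ℂ] y'') = (μ x x' x'') ⊗ₜ[ℂ] (ν y y' y''))

/-- A *-ternary product, bundled as a map linear in the first variable and conjugate-linear in the
second, with values in the linear endomorphisms (the third variable). -/
def IsStarTernary.toLinear {G : Type*} [AddCommGroup G] [Module ℂ G] {μ : G → G → G → G}
    (h : IsStarTernary μ) : G →ₗ[ℂ] G →ₛₗ[starRingEnd ℂ] (G →ₗ[ℂ] G) where
  toFun x :=
    { toFun := fun y =>
        { toFun := μ x y
          map_add' := h.2.2.1 x y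
          map_smul' := fun c z => h.2.2.2.2.2.1 c x y z }
      map_add' := fun y y' => LinearMap.ext fun z => h.2.1 x y y' z
      map_smul' := fun c y => LinearMap.ext fun z => h.2.2.2.2.1 c x y z }
  map_add' x x' := LinearMap.ext fun y => LinearMap.ext fun z => h.1 x x' y z
  map_smul' c x := LinearMap.ext fun y => LinearMap.ext fun z => h.2.2.2.1 c x y z

/-- The ternary product `μ ⊙ ν` on `E ⊗ F`. -/
def ternaryTensor {μ : E → E → E → E} (hμ : IsStarTernary μ)
    {ν : F → F → F → F} (hν : IsStarTernary ν) (x y z : E ⊗[ℂ] F) : E ⊗[ℂ] F :=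
  TensorProduct.homTensorHomMap (.id ℂ) E F E F
    (TensorProduct.map₂ hμ.toLinear hν.toLinear x y) z

theorem isTernaryTensorExt_ternaryTensor {μ : E → E → E → E} (hμ : IsStarTernary μ)
    {ν : F → F → F → F} (hν : IsStarTernary ν) :
    IsTernaryTensorExt μ ν (ternaryTensor hμ hν) := by
  refine ⟨?_, ?_, ?_, ?_, ?_, ?_, ?_⟩
  · intros; simp [ternaryTensor]
  · intros; simp [ternaryTensor]
  · intros; simp [ternaryTensor]
  · intros; simp [ternaryTensor]
  · intros; simp [ternaryTensor]
  · intros; simp [ternaryTensor]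
  · intros; simp [ternaryTensor]; rfl

/-- A map additive in each variable vanishes when any variable is zero; this serves the zero case
of inductions on tensors. -/
theorem IsTernaryTensorExt.map_zero {μ : E → E → E → E} {ν : F → F → F → F}
    {T : (E ⊗[ℂ] F) → (E ⊗[ℂ] F) → (E ⊗[ℂ] F) → E ⊗[ℂ] F} (h : IsTernaryTensorExt μ ν T) :
    (∀ y z, T 0 y z = 0) ∧ (∀ x z, T x 0 z = 0) ∧ (∀ x y, T x y 0 = 0) := by
  obtain ⟨h1, h2, h3, -⟩ := h
  refine ⟨fun y z => ?_, fun x z => ?_, fun x y => ?_⟩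
  · simpa using h1 0 0 y z
  · simpa using h2 x 0 0 z
  · simpa using h3 x y 0 0

theorem IsTernaryTensorExt.unique {μ : E → E → E → E} {ν : F → F → F → F}
    {T T' : (E ⊗[ℂ] F) → (E ⊗[ℂ] F) → (E ⊗[ℂ] F) → E ⊗[ℂ] F}
    (h : IsTernaryTensorExt μ ν T) (h' : IsTernaryTensorExt μ ν T') : T = T' := by
  obtain ⟨z1, z2, z3⟩ := h.map_zero
  obtain ⟨z1', z2', z3'⟩ := h'.map_zero
  obtain ⟨a1, a2, a3, -, -, -, ht⟩ := h
  obtain ⟨a1', a2', a3', -, -, -, ht'⟩ := h'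
  funext x y z
  induction x with
  | zero => rw [z1, z1']
  | add x x' hx hx' => rw [a1, a1', hx, hx']
  | tmul x₁ x₂ =>
  induction y with
  | zero => rw [z2, z2']
  | add y y' hy hy' => rw [a2, a2', hy, hy']
  | tmul y₁ y₂ =>
  induction z with
  | zero => rw [z3, z3']
  | add z z' hz hz' => rw [a3, a3', hz, hz']
  | tmul z₁ z₂ => rw [ht, ht']

theorem IsTernaryTensorExt.isStarTernary {μ : E → E → E → E} (hμ : IsStarTernary μ)
    {ν : F → F → F → F} (hν : IsStarTernary ν)
    {T : (E ⊗[ℂ] F) → (E ⊗[ℂ] F) → (E ⊗[ℂ] F) → E ⊗[ℂ] F}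
    (h : IsTernaryTensorExt μ ν T) : IsStarTernary T := by
  obtain ⟨z1, z2, z3⟩ := h.map_zero
  obtain ⟨a1, a2, a3, s1, s2, s3, ht⟩ := h
  obtain ⟨-, -, -, -, -, -, μ1, μ2⟩ := hμ
  obtain ⟨-, -, -, -, -, -, ν1, ν2⟩ := hν
  -- Both identities are treated at once: all three sides are additive in all five variables.
  have key : ∀ x y z u v, T (T x y z) u v = T x (T u z y) v ∧
      T x (T u z y) v = T x y (T z u v) := by
    intro x y z u v
    induction x with
    | zero => simp only [z1, and_self]
    | add x x' hx hx' => simp only [a1, hx.1, hx.2, hx'.1, hx'.2, and_self]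
    | tmul x₁ x₂ =>
    induction y with
    | zero => simp only [z1, z2, z3, and_self]
    | add y y' hy hy' => simp only [a1, a2, a3, hy.1, hy.2, hy'.1, hy'.2, and_self]
    | tmul y₁ y₂ =>
    induction z with
    | zero => simp only [z1, z2, z3, and_self]
    | add z z' hz hz' => simp only [a1, a2, a3, hz.1, hz.2, hz'.1, hz'.2, and_self]
    | tmul z₁ z₂ =>
    induction u with
    | zero => simp only [z1, z2, z3, and_self]
    | add u u' hu hu' => simp only [a1, a2, a3, hu.1, hu.2, hu'.1, hu'.2, and_self]
    | tmul u₁ u₂ =>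
    induction v with
    | zero => simp only [z3, and_self]
    | add v v' hv hv' => simp only [a3, hv.1, hv.2, hv'.1, hv'.2, and_self]
    | tmul v₁ v₂ => simp only [ht, μ1, ν1, μ2, ν2, and_self]
  exact ⟨a1, a2, a3, s1, s2, s3, fun x y z u v => (key x y z u v).1,
    fun x y z u v => (key x y z u v).2⟩

/-- If `(E, μ)` and `(F, ν)` are *-ternary rings, then there exists a unique
map `μ ⊙ ν` on `E ⊗ F`, linear in the first and third variables and conjugate-linear in the
second, with `(μ ⊙ ν)(x ⊗ y, x' ⊗ y', x'' ⊗ y'') = μ x x' x'' ⊗ ν y y' y''`, and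
`(E ⊗ F, μ ⊙ ν)` is again a *-ternary ring. -/
theorem exists_unique_starTernary_tensor
    (μ : E → E → E → E) (hμ : IsStarTernary μ)
    (ν : F → F → F → F) (hν : IsStarTernary ν) :
    ∃ T : (E ⊗[ℂ] F) → (E ⊗[ℂ] F) → (E ⊗[ℂ] F) → E ⊗[ℂ] F,
      IsTernaryTensorExt μ ν T ∧
      (∀ T' : (E ⊗[ℂ] F) → (E ⊗[ℂ] F) → (E ⊗[ℂ] F) → E ⊗[ℂ] F,
        IsTernaryTensorExt μ ν T' → T' = T) ∧
      IsStarTernary T := by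
  have h := isTernaryTensorExt_ternaryTensor hμ hν
  exact ⟨ternaryTensor hμ hν, h, fun T' h' => h'.unique h, h.isStarTernary hμ hν⟩

end
end

section
/- Let A and B be C*-algebras, and let 𝔞 = (a_ij), 𝔠 = (c_ij) ∈ M_n(A) and 𝔟 = (b_ij), 𝔡 = (d_ij) ∈ M_n(B) satisfy 0 ≤ 𝔞 ≤ 𝔠 and 0 ≤ 𝔟 ≤ 𝔡. Then for every *-homomorphism φ from the algebraic tensor product A ⊗ B into a C*-algebra D, the matrix (φ(a_ij ⊗ b_ij))_{i,j} is ≤ the matrix (φ(c_ij ⊗ d_ij))_{i,j} in the C*-algebra M_n(D). -/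
/-!
Entrywise, `c ⊗ d - a ⊗ b = (c - a) ⊗ (d - b) + (c - a) ⊗ b + a ⊗ (d - b)`, so it suffices that
the Schur tensor product of positive matrices `u* u` and `v* v` has positive image under `φ`. Its
`(i, j)` entry is `∑ k l, star (φ (u_ki ⊗ v_li)) * φ (u_kj ⊗ v_lj)`, so the image is
`∑ l, w_l* w_l` with `w_l = (φ (u_ki ⊗ v_li))_{k,i}` (`map_tmul_star_mul_self`). Such a sum is
positive because `Mₙ(D)` is a C*-algebra (`exists_star_mul_self_eq_sum`).
-/

open scoped TensorProduct

noncomputable section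

/-- The star operation on the algebraic tensor product of two complex star modules,
determined by `star (a ⊗ₜ b) = star a ⊗ₜ star b`. -/
def tensorStar (A B : Type*) [AddCommGroup A] [Module ℂ A] [StarAddMonoid A] [StarModule ℂ A]
    [AddCommGroup B] [Module ℂ B] [StarAddMonoid B] [StarModule ℂ B] :
    (A ⊗[ℂ] B) →+ (A ⊗[ℂ] B) :=
  TensorProduct.liftAddHom
    { toFun := fun a =>
        { toFun := fun b => star a ⊗ₜ[ℂ] star b
          map_zero' := by simp
          map_add' := fun b b' => by simp [star_add, TensorProduct.tmul_add] }
      map_zero' := by ext b; simp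
      map_add' := fun a a' => by ext b; simp [star_add, TensorProduct.add_tmul] }
    (fun c a b => by
      show star (c • a) ⊗ₜ[ℂ] star b = star a ⊗ₜ[ℂ] star (c • b)
      rw [star_smul, star_smul, TensorProduct.smul_tmul])

/-- `A ⊗[ℂ] B` carries a canonical star operation, `star (a ⊗ₜ b) = star a ⊗ₜ star b`. -/
instance instTensorStar (A B : Type*) [AddCommGroup A] [Module ℂ A] [StarAddMonoid A]
    [StarModule ℂ A] [AddCommGroup B] [Module ℂ B] [StarAddMonoid B] [StarModule ℂ B] :
    Star (A ⊗[ℂ] B) :=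
  ⟨tensorStar A B⟩

/-- The canonical order on the C*-algebra of `n × n` matrices over a C*-algebra: `X ≤ Y` iff
the difference `Y - X` is positive, i.e. of the form `𝔲* 𝔲`. -/
def MatLE {n : Type*} [Fintype n] {R : Type*} [NonUnitalNonAssocRing R] [Star R]
    (X Y : Matrix n n R) : Prop :=
  ∃ u : Matrix n n R, Y - X = star u * u

variable {A B D : Type*} [NonUnitalCStarAlgebra A] [NonUnitalCStarAlgebra B]
  [NonUnitalCStarAlgebra D]

lemma exists_eq_star_mul_self_of_nonneg {E : Type*} [NonUnitalCStarAlgebra E] [PartialOrder E]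
    [StarOrderedRing E] {x : E} (hx : 0 ≤ x) : ∃ u, x = star u * u :=
  CStarAlgebra.nonneg_iff_eq_star_mul_self.mp hx

/-- Sums of positive matrices over a C*-algebra are positive. This is where the C*-structure of
`Mₙ(D)` enters: a sum of elements `star w * w` is again of this form. -/
lemma exists_star_mul_self_eq_sum [PartialOrder D] [StarOrderedRing D] {n ι : Type*}
    [Fintype n] (s : Finset ι) (w : ι → Matrix n n D) :
    ∃ u : Matrix n n D, ∑ l ∈ s, star (w l) * w l = star u * u := by
  let w' : ι → CStarMatrix n n D := fun l => CStarMatrix.ofMatrix (w l)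
  have h : 0 ≤ ∑ l ∈ s, star (w' l) * w' l :=
    Finset.sum_nonneg fun l _ => star_mul_self_nonneg (w' l)
  obtain ⟨u, hu⟩ := exists_eq_star_mul_self_of_nonneg h
  exact ⟨CStarMatrix.ofMatrix.symm u, hu⟩

/-- The image under `φ` of the Schur tensor product of `u* u` and `v* v` is the sum over `l` of
`w_l* w_l`, where `w_l` has entries `φ (u_ki ⊗ v_li)`. -/
lemma map_tmul_star_mul_self {n : Type*} [Fintype n] (φ : A ⊗[ℂ] B →+ D)
    (hmul : ∀ x y, φ (x * y) = φ x * φ y) (hstar : ∀ x, φ (star x) = star (φ x))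
    (u : Matrix n n A) (v : Matrix n n B) :
    (Matrix.of fun i j => φ ((star u * u) i j ⊗ₜ[ℂ] (star v * v) i j)) =
      ∑ l, star (Matrix.of fun k i => φ (u k i ⊗ₜ[ℂ] v l i)) *
        (Matrix.of fun k i => φ (u k i ⊗ₜ[ℂ] v l i)) := by
  have hs (x : A) (y : B) : star (φ (x ⊗ₜ[ℂ] y)) = φ (star x ⊗ₜ[ℂ] star y) :=
    (hstar (x ⊗ₜ[ℂ] y)).symm
  ext i j
  simp only [Matrix.of_apply, Matrix.sum_apply, Matrix.mul_apply, Matrix.star_apply, hs, ← hmul,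
    Algebra.TensorProduct.tmul_mul_tmul, TensorProduct.sum_tmul, TensorProduct.tmul_sum, map_sum]

/-- If `0 ≤ 𝔞 ≤ 𝔠` in `Mₙ(A)` and `0 ≤ 𝔟 ≤ 𝔡` in `Mₙ(B)`, then for every
*-homomorphism `φ : A ⊗ B → D` into a C*-algebra `D`, the matrix `(φ(a_ij ⊗ b_ij))` is `≤` the
matrix `(φ(c_ij ⊗ d_ij))` in the C*-algebra `Mₙ(D)`. -/
theorem matrix_tmul_le [PartialOrder D] [StarOrderedRing D]
    (n : ℕ) (a c : Matrix (Fin n) (Fin n) A) (b d : Matrix (Fin n) (Fin n) B)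
    (ha : MatLE 0 a) (hac : MatLE a c) (hb : MatLE 0 b) (hbd : MatLE b d)
    (φ : A ⊗[ℂ] B → D)
    (hadd : ∀ x y, φ (x + y) = φ x + φ y)
    (hsmul : ∀ (z : ℂ) (x), φ (z • x) = z • φ x)
    (hmul : ∀ x y, φ (x * y) = φ x * φ y)
    (hstar : ∀ x, φ (star x) = star (φ x)) :
    MatLE (Matrix.of fun i j => φ (a i j ⊗ₜ[ℂ] b i j))
      (Matrix.of fun i j => φ (c i j ⊗ₜ[ℂ] d i j)) := by
  let ψ : A ⊗[ℂ] B →+ D := AddMonoidHom.mk' φ hadd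
  obtain ⟨u, hu⟩ := ha
  obtain ⟨p, hp⟩ := hac
  obtain ⟨v, hv⟩ := hb
  obtain ⟨q, hq⟩ := hbd
  rw [sub_zero] at hu hv
  -- `c ⊗ d - a ⊗ b = (c - a) ⊗ (d - b) + (c - a) ⊗ b + a ⊗ (d - b)`
  have key : (Matrix.of fun i j => φ (c i j ⊗ₜ[ℂ] d i j)) -
      (Matrix.of fun i j => φ (a i j ⊗ₜ[ℂ] b i j)) =
      (Matrix.of fun i j => ψ ((star p * p) i j ⊗ₜ[ℂ] (star q * q) i j)) +
      (Matrix.of fun i j => ψ ((star p * p) i j ⊗ₜ[ℂ] (star v * v) i j)) +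
      (Matrix.of fun i j => ψ ((star u * u) i j ⊗ₜ[ℂ] (star q * q) i j)) := by
    rw [← hu, ← hv, ← hp, ← hq]
    ext i j
    change ψ _ - ψ _ = ψ _ + ψ _ + ψ _
    rw [← map_sub, ← map_add, ← map_add]
    congr 1
    simp only [Matrix.sub_apply, TensorProduct.sub_tmul, TensorProduct.tmul_sub]
    abel
  unfold MatLE
  rw [key, map_tmul_star_mul_self ψ hmul hstar, map_tmul_star_mul_self ψ hmul hstar,
    map_tmul_star_mul_self ψ hmul hstar]
  obtain ⟨x, hx⟩ := exists_star_mul_self_eq_sum (D := D) Finset.univ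
    fun l => Matrix.of fun k i => ψ (p k i ⊗ₜ[ℂ] q l i)
  obtain ⟨y, hy⟩ := exists_star_mul_self_eq_sum (D := D) Finset.univ
    fun l => Matrix.of fun k i => ψ (p k i ⊗ₜ[ℂ] v l i)
  obtain ⟨z, hz⟩ := exists_star_mul_self_eq_sum (D := D) Finset.univ
    fun l => Matrix.of fun k i => ψ (u k i ⊗ₜ[ℂ] q l i)
  rw [hx, hy, hz]
  obtain ⟨r, hr⟩ := exists_star_mul_self_eq_sum (D := D) Finset.univ ![x, y, z]
  exact ⟨r, by simpa [Fin.sum_univ_three] using hr⟩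

end
end

section
/- Let A and B be C*-algebras and let 𝔞 = (a_ij) ∈ M_n(A) and 𝔟 = (b_ij) ∈ M_n(B) be positive matrices. Then for every *-homomorphism φ from the algebraic tensor product A ⊗ B into a C*-algebra D, the element φ(Σ_{i,j=1}^n a_ij ⊗ b_ij) is positive in D. -/
/-!
Write `a = u* u` and `b = v* v`, so that `a i j = ∑ k, (u k i)* (u k j)` and
`b i j = ∑ l, (v l i)* (v l j)`. Expanding the tensors and exchanging sums,
`∑ i j, a i j ⊗ b i j = ∑ k l, (w k l)* (w k l)` with `w k l = ∑ j, u k j ⊗ v l j`,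
and a *-homomorphism sends this to a sum of elements `d* d` of `D`, which is positive. In the proof
the computation is carried out in `D`, and `w k l` there stands for the image under `φ`.
-/

open scoped TensorProduct

noncomputable section

variable {A B D : Type*} [NonUnitalCStarAlgebra A] [NonUnitalCStarAlgebra B]
  [NonUnitalCStarAlgebra D]

/-- If `𝔞 ∈ Mₙ(A)` and `𝔟 ∈ Mₙ(B)` are positive, then for every
*-homomorphism `φ : A ⊗ B → D` into a C*-algebra `D`, the element `φ(Σ_{i,j} a_ij ⊗ b_ij)` is
positive in `D`. -/
theorem sum_tmul_pos [PartialOrder D] [StarOrderedRing D]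
    (n : ℕ) (a : Matrix (Fin n) (Fin n) A) (b : Matrix (Fin n) (Fin n) B)
    (ha : MatLE 0 a) (hb : MatLE 0 b)
    (φ : A ⊗[ℂ] B → D)
    (hadd : ∀ x y, φ (x + y) = φ x + φ y)
    (hsmul : ∀ (z : ℂ) (x), φ (z • x) = z • φ x)
    (hmul : ∀ x y, φ (x * y) = φ x * φ y)
    (hstar : ∀ x, φ (star x) = star (φ x)) :
    0 ≤ φ (∑ i : Fin n, ∑ j : Fin n, a i j ⊗ₜ[ℂ] b i j) := by
  obtain ⟨u, hu⟩ := ha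
  obtain ⟨v, hv⟩ := hb
  rw [sub_zero] at hu hv
  have hstar_tmul : ∀ (x : A) (y : B), star (x ⊗ₜ[ℂ] y) = star x ⊗ₜ[ℂ] star y := fun _ _ => rfl
  let Φ : A ⊗[ℂ] B →+ D := AddMonoidHom.mk' φ hadd
  let w : Fin n → Fin n → D := fun k l => ∑ j, φ (u k j ⊗ₜ[ℂ] v l j)
  have key : φ (∑ i : Fin n, ∑ j : Fin n, a i j ⊗ₜ[ℂ] b i j) =
      ∑ k, ∑ l, star (w k l) * w k l := by
    have hw : ∀ k l, star (w k l) * w k l =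
        ∑ i, ∑ j, Φ ((star (u k i) * u k j) ⊗ₜ[ℂ] (star (v l i) * v l j)) := by
      intro k l
      simp only [w, star_sum, Finset.sum_mul_sum]
      refine Finset.sum_congr rfl fun i _ => Finset.sum_congr rfl fun j _ => ?_
      rw [← hstar, hstar_tmul, ← hmul, Algebra.TensorProduct.tmul_mul_tmul]
      rfl
    have hab : ∀ i j, a i j ⊗ₜ[ℂ] b i j =
        ∑ k, ∑ l, (star (u k i) * u k j) ⊗ₜ[ℂ] (star (v l i) * v l j) := by
      intro i j
      rw [hu, hv]
      simp only [Matrix.mul_apply, Matrix.star_apply, TensorProduct.sum_tmul,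
        TensorProduct.tmul_sum]
      exact Finset.sum_comm
    change Φ _ = _
    simp only [hw, hab, map_sum]
    -- The order of summation goes from `i, j, k, l` to `k, i, j, l`, and then to `k, l, i, j`.
    rw [Finset.sum_congr rfl fun i _ => Finset.sum_comm, Finset.sum_comm]
    refine Finset.sum_congr rfl fun k _ => ?_
    rw [Finset.sum_congr rfl fun i _ => Finset.sum_comm, Finset.sum_comm]
  rw [key]
  exact Finset.sum_nonneg fun k _ => Finset.sum_nonneg fun l _ => star_mul_self_nonneg _

end
end

section
/- Let A and B be C*-algebras, a ∈ A, and let φ be a *-homomorphism from the algebraic tensor product A ⊗ B into a C*-algebra D. Then for every t ∈ A ⊗ B one has ‖φ((l_a ⊗ id_B)(t))‖ ≤ ‖a‖ · ‖φ(t)‖, where l_a ⊗ id_B is the linear map on A ⊗ B determined by x ⊗ y ↦ (ax) ⊗ y. -/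
/-!
Write `a · t` for `(l_a ⊗ id) t`. The element `‖a‖² - a⋆a` of the unitization of `A` is positive,
hence has a self-adjoint square root, of the form `‖a‖ - e` with `e ∈ A`
(`exists_isSelfAdjoint_sub_mul_self`). As `(b · t)⋆ s` and `t⋆ (b⋆ · s)` have the same image under
the *-homomorphism `φ` (`star_apply_mulLeft_rTensor_mul`), the element `u = ‖a‖ t - e · t`
satisfies `φ(u)⋆φ(u) = ‖a‖² φ(t)⋆φ(t) - φ(a · t)⋆φ(a · t)`. The left side is positive, so
`φ(a · t)⋆φ(a · t) ≤ ‖a‖² φ(t)⋆φ(t)` in `D`, and the C*-identity gives the norm bound.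
-/

open scoped TensorProduct

noncomputable section

/-- For `h = a⋆a` there is a self-adjoint `e` with `(‖a‖ - e)² = ‖a‖² - h` in the unitization.
Since `x ↦ ‖a‖ - √(‖a‖² - x)` vanishes at `0`, the element `e` can be taken in `A` itself. -/
lemma exists_isSelfAdjoint_sub_mul_self {A : Type*} [NonUnitalCStarAlgebra A] (a : A) :
    ∃ e : A, IsSelfAdjoint e ∧
      ((2 * ‖a‖ : ℝ) : ℂ) • e - e * e = star a * a := by
  have hsa : IsSelfAdjoint (star a * a) := IsSelfAdjoint.star_mul_self a
  set g : ℝ → ℝ := fun x => ‖a‖ - √(‖a‖ ^ 2 - x) with hg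
  have hg0 : g 0 = 0 := by simp [hg]
  have hgc : Continuous g := by fun_prop
  refine ⟨cfcₙ g (star a * a), cfcₙ_predicate g _, ?_⟩
  have hle : ∀ x ∈ quasispectrum ℝ (star a * a), x ≤ ‖a‖ ^ 2 := by
    intro x hx
    have h := NonUnitalIsometricContinuousFunctionalCalculus.norm_quasispectrum_le
      (𝕜 := ℝ) (star a * a) hx hsa
    rw [CStarRing.norm_star_mul_self] at h
    nlinarith [le_abs_self x, Real.norm_eq_abs x]
  rw [Complex.coe_smul, ← cfcₙ_smul (2 * ‖a‖ : ℝ) g (star a * a),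
    ← cfcₙ_mul g g (star a * a), ← cfcₙ_sub _ _ (star a * a)]
  conv_rhs => rw [← cfcₙ_id' ℝ (star a * a)]
  refine cfcₙ_congr fun x hx => ?_
  have := Real.sq_sqrt (sub_nonneg.2 (hle x hx))
  simp only [hg, smul_eq_mul]
  linear_combination -this

/-- Left multiplication by `star e` on the first leg is the adjoint of left multiplication by `e`,
for the `D`-valued form `(t, s) ↦ star (φ t) * φ s`. -/
lemma star_apply_mulLeft_rTensor_mul
    {A B D : Type*} [NonUnitalCStarAlgebra A] [NonUnitalCStarAlgebra B]
    [NonUnitalCStarAlgebra D] (φ : A ⊗[ℂ] B →ₗ[ℂ] D)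
    (hmul : ∀ x y, φ (x * y) = φ x * φ y)
    (hstar : ∀ x, φ (star x) = star (φ x)) (e : A) (t s : A ⊗[ℂ] B) :
    star (φ (LinearMap.rTensor B (LinearMap.mulLeft ℂ e) t)) * φ s =
      star (φ t) * φ (LinearMap.rTensor B (LinearMap.mulLeft ℂ (star e)) s) := by
  induction t using TensorProduct.induction_on with
  | zero => simp
  | add x y hx hy => simp only [map_add, star_add, add_mul, hx, hy]
  | tmul x y =>
    induction s using TensorProduct.induction_on with
    | zero => simp
    | add x y hx hy => simp only [map_add, mul_add, hx, hy]
    | tmul z w =>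
      have hst : ∀ (p : A) (q : B), star (p ⊗ₜ[ℂ] q) = star p ⊗ₜ[ℂ] star q := fun _ _ => rfl
      rw [← hstar, ← hstar, ← hmul, ← hmul]
      simp [hst, mul_assoc]

/-- For C*-algebras `A`, `B`, `D`, an element `a ∈ A`, and a *-homomorphism
`φ : A ⊗ B → D`, one has `‖φ((l_a ⊗ id_B) t)‖ ≤ ‖a‖ * ‖φ t‖` for every `t ∈ A ⊗ B`, where
`l_a ⊗ id_B` is determined by `x ⊗ y ↦ (a x) ⊗ y`. -/
theorem norm_apply_mulLeft_rTensor_le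
    {A B D : Type*} [NonUnitalCStarAlgebra A] [NonUnitalCStarAlgebra B]
    [NonUnitalCStarAlgebra D] (a : A)
    (φ : A ⊗[ℂ] B → D)
    (hadd : ∀ x y, φ (x + y) = φ x + φ y)
    (hsmul : ∀ (z : ℂ) (x), φ (z • x) = z • φ x)
    (hmul : ∀ x y, φ (x * y) = φ x * φ y)
    (hstar : ∀ x, φ (star x) = star (φ x))
    (t : A ⊗[ℂ] B) :
    ‖φ (LinearMap.rTensor B (LinearMap.mulLeft ℂ a) t)‖ ≤ ‖a‖ * ‖φ t‖ := by
  let _ : PartialOrder D := CStarAlgebra.spectralOrder D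
  let _ : StarOrderedRing D := CStarAlgebra.spectralOrderedRing D
  let ψ : A ⊗[ℂ] B →ₗ[ℂ] D := { toFun := φ, map_add' := hadd, map_smul' := hsmul }
  change ‖ψ (LinearMap.rTensor B (LinearMap.mulLeft ℂ a) t)‖ ≤ ‖a‖ * ‖ψ t‖
  have key := star_apply_mulLeft_rTensor_mul ψ hmul hstar
  obtain ⟨e, he, hea⟩ := exists_isSelfAdjoint_sub_mul_self a
  set L : A → (A ⊗[ℂ] B →ₗ[ℂ] A ⊗[ℂ] B) :=
    fun b => LinearMap.rTensor B (LinearMap.mulLeft ℂ b) with hL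
  have hLL : ∀ b c s, L b (L c s) = L (b * c) s := fun b c s => by
    simp only [hL, LinearMap.mulLeft_mul, LinearMap.rTensor_comp, LinearMap.comp_apply]
  have hLa : L (star a * a) t = ((2 * ‖a‖ : ℝ) : ℂ) • L e t - L (e * e) t := by
    have : LinearMap.mulLeft ℂ (star a * a) =
        ((2 * ‖a‖ : ℝ) : ℂ) • LinearMap.mulLeft ℂ e - LinearMap.mulLeft ℂ (e * e) := by
      ext x; simp [← hea, sub_mul, smul_mul_assoc, mul_assoc]
    simp only [hL, this, LinearMap.rTensor_sub, LinearMap.rTensor_smul, LinearMap.sub_apply,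
      LinearMap.smul_apply]
  have h1 : star (ψ (L a t)) * ψ (L a t) = star (ψ t) * ψ (L (star a * a) t) := by
    rw [key, ← hLL]
  have h2 : star (ψ (L e t)) * ψ t = star (ψ t) * ψ (L e t) := by
    rw [key, he.star_eq]
  have h3 : star (ψ (L e t)) * ψ (L e t) = star (ψ t) * ψ (L (e * e) t) := by
    rw [key, he.star_eq, ← hLL]
  -- The defect `‖a‖² (ψ t)⋆(ψ t) - (ψ (a t))⋆(ψ (a t))` is the square of `ψ ((‖a‖ - e) t)`.
  have hid : star ((‖a‖ : ℂ) • ψ t - ψ (L e t)) * ((‖a‖ : ℂ) • ψ t - ψ (L e t)) =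
      star ((‖a‖ : ℂ) • ψ t) * ((‖a‖ : ℂ) • ψ t) - star (ψ (L a t)) * ψ (L a t) := by
    rw [h1, hLa]
    simp only [star_sub, star_smul, sub_mul, mul_sub, smul_mul_assoc, mul_smul_comm, map_sub,
      map_smul, h2, h3, Complex.star_def, Complex.conj_ofReal]
    push_cast
    module
  have hle : star (ψ (L a t)) * ψ (L a t) ≤ star ((‖a‖ : ℂ) • ψ t) * ((‖a‖ : ℂ) • ψ t) := by
    rw [← sub_nonneg, ← hid]
    exact star_mul_self_nonneg _
  have hn := CStarAlgebra.norm_le_norm_of_nonneg_of_le (star_mul_self_nonneg _) hle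
  rw [CStarRing.norm_star_mul_self, CStarRing.norm_star_mul_self] at hn
  have hfin : ‖ψ (L a t)‖ ≤ ‖(‖a‖ : ℂ) • ψ t‖ :=
    nonneg_le_nonneg_of_sq_le_sq (norm_nonneg _) hn
  simpa [norm_smul] using hfin

end
end

section
/- Let A and B be C*-algebras, I ⊆ A and J ⊆ B closed two-sided ideals, and H a complex Hilbert space. Let π_I : I → B(H) and π_J : J → B(H) be nondegenerate representations (i.e. *-homomorphisms into the bounded operators such that the linear spans of π_I(I)H and of π_J(J)H are dense in H) which commute, i.e. π_I(x)π_J(y) = π_J(y)π_I(x) for all x ∈ I, y ∈ J. If π_A : A → B(H) and π_B : B → B(H) are *-homomorphisms extending π_I and π_J respectively, then π_A(a)π_B(b) = π_B(b)π_A(a) for all a ∈ A and b ∈ B. -/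
/-! An operator commuting with a nondegenerate representation of an ideal commutes with any
extension of it to the whole algebra: on a vector `π x h` with `x` in the ideal,
`T (π c) (π x h) = T (π (c x) h) = π (c x) (T h) = (π c) (π x) (T h) = (π c) T (π x h)`,
and such vectors span a dense subspace. Applying this to `T = π_J y` gives that every `π_A a`
commutes with `π_J`; applying it again to `T = π_A a` gives the theorem. -/

noncomputable section
set_option synthInstance.maxHeartbeats 1000000
set_option maxHeartbeats 1000000

/-- If `π` restricts to a nondegenerate representation of the left ideal `K`, the commutant of
`π(K)` is contained in the commutant of the whole image of `π`. -/
theorem commute_extension_of_commute_ideal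
    {C : Type*} [NonUnitalCStarAlgebra C]
    {H : Type*} [NormedAddCommGroup H] [InnerProductSpace ℂ H] [CompleteSpace H]
    (K : NonUnitalStarSubalgebra ℂ C) (hK : ∀ (c x : C), x ∈ K → c * x ∈ K)
    (π : C →⋆ₙₐ[ℂ] (H →L[ℂ] H))
    (hdense : Dense ((Submodule.span ℂ
        { v : H | ∃ (x : ↥K) (h : H), π x h = v } : Submodule ℂ H) : Set H))
    (T : H →L[ℂ] H) (hT : ∀ x ∈ K, T * π x = π x * T) (c : C) :
    T * π c = π c * T := by
  refine ContinuousLinearMap.ext_on hdense ?_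
  rintro _ ⟨x, h, rfl⟩
  have h1 : T (π (c * x) h) = π (c * x) (T h) := DFunLike.congr_fun (hT _ (hK c x x.2)) h
  have h2 : T (π x h) = π x (T h) := DFunLike.congr_fun (hT _ x.2) h
  rw [map_mul] at h1
  change T (π c (π x h)) = π c (T (π x h))
  rw [h2]
  exact h1

/-- Let `I ⊆ A`, `J ⊆ B` be closed two-sided ideals of C*-algebras, `H` a
complex Hilbert space, and `π_I : I → B(H)`, `π_J : J → B(H)` commuting nondegenerate
representations. If `π_A : A → B(H)` and `π_B : B → B(H)` are *-homomorphisms extending `π_I`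
and `π_J` respectively, then `π_A a` and `π_B b` commute for all `a ∈ A`, `b ∈ B`. -/
theorem extensions_of_commuting_nondegenerate_reps_commute
    {A B : Type*} [NonUnitalCStarAlgebra A] [NonUnitalCStarAlgebra B]
    {H : Type*} [NormedAddCommGroup H] [InnerProductSpace ℂ H] [CompleteSpace H]
    (I : NonUnitalStarSubalgebra ℂ A) (J : NonUnitalStarSubalgebra ℂ B)
    (hI : ∀ (a x : A), x ∈ I → a * x ∈ I ∧ x * a ∈ I)
    (hJ : ∀ (b y : B), y ∈ J → b * y ∈ J ∧ y * b ∈ J)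
    (hIclosed : IsClosed (I : Set A)) (hJclosed : IsClosed (J : Set B))
    (πI : ↥I →⋆ₙₐ[ℂ] (H →L[ℂ] H)) (πJ : ↥J →⋆ₙₐ[ℂ] (H →L[ℂ] H))
    (hInondeg : Dense ((Submodule.span ℂ
        { v : H | ∃ (x : ↥I) (h : H), πI x h = v } : Submodule ℂ H) : Set H))
    (hJnondeg : Dense ((Submodule.span ℂ
        { v : H | ∃ (y : ↥J) (h : H), πJ y h = v } : Submodule ℂ H) : Set H))
    (hcomm : ∀ (x : ↥I) (y : ↥J), πI x * πJ y = πJ y * πI x)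
    (πA : A →⋆ₙₐ[ℂ] (H →L[ℂ] H)) (πB : B →⋆ₙₐ[ℂ] (H →L[ℂ] H))
    (hA : ∀ x : ↥I, πA ↑x = πI x) (hB : ∀ y : ↥J, πB ↑y = πJ y) :
    ∀ (a : A) (b : B), πA a * πB b = πB b * πA a := by
  intro a b
  refine commute_extension_of_commute_ideal J (fun c x hx => (hJ c x hx).1) πB
    (by simpa only [hB] using hJnondeg) (πA a) (fun y hy => ?_) b
  refine (commute_extension_of_commute_ideal I (fun c x hx => (hI c x hx).1) πA
    (by simpa only [hA] using hInondeg) (πB y) (fun x hx => ?_) a).symm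
  rw [hA ⟨x, hx⟩, hB ⟨y, hy⟩]
  exact (hcomm ⟨x, hx⟩ ⟨y, hy⟩).symm

end
end
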